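/- Every system of half-spaces of a central essential real hyperplane arrangement admits a sink. Precisely: let $\alpha_1,\dots,\alpha_n$ be nonzero linear forms on $\mathbb{R}^\ell$ whose kernels $H_i=\ker\alpha_i$ are pairwise distinct and satisfy $\bigcap_{i=1}^n H_i=\{0\}$, and let $\varepsilon\in\{+1,-1\}^n$ be any sign vector. Put $H_i^{\varepsilon_i}=\{x\in\mathbb{R}^\ell : \varepsilon_i\,\alpha_i(x)>0\}$. A chamber is a connected component of $\mathbb{R}^\ell\setminus\bigcup_{i=1}^n H_i$, and $H_i$ is a wall of a chamber $C$ if $\overline{C}\cap H_i$ spans $H_i$ (equivalently, has nonempty interior relative to $H_i$). Then there exists a chamber $C$ such that for every index $i$ for which $H_i$ is a wall of $C$, one has $C\subseteq H_i^{\varepsilon_i}$ (that is, $C$ is a sink). -/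

import Mathlib

namespace Arrangement

/-- Real vector space `ℝ^ℓ`. -/
abbrev Vsp (ℓ : ℕ) : Type := EuclideanSpace ℝ (Fin ℓ)

/-- The complement of the union of the hyperplanes `ker (α i)`. -/
def cmpl {ℓ n : ℕ} (α : Fin n → (Vsp ℓ →ₗ[ℝ] ℝ)) : Set (Vsp ℓ) := {x | ∀ i, α i x ≠ 0}

/-- `C` is a chamber: a connected component of the complement of the arrangement. -/
def IsChamber {ℓ n : ℕ} (α : Fin n → (Vsp ℓ →ₗ[ℝ] ℝ)) (C : Set (Vsp ℓ)) : Prop :=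
  ∃ x ∈ cmpl α, C = connectedComponentIn (cmpl α) x

/-- `H_i = ker (α i)` is a wall of the chamber `C`:
`closure C ∩ H_i` spans `H_i` (equivalently, since this is a convex cone containing `0`,
it has nonempty interior relative to `H_i`). -/
def IsWall {ℓ n : ℕ} (α : Fin n → (Vsp ℓ →ₗ[ℝ] ℝ)) (i : Fin n) (C : Set (Vsp ℓ)) : Prop :=
  Submodule.span ℝ (closure C ∩ {x | α i x = 0}) = LinearMap.ker (α i)

/-- The open half-space `H_i^{ε_i}`, for a sign `ε i = 1` or `ε i = -1`. -/
def halfSpace {ℓ n : ℕ} (α : Fin n → (Vsp ℓ →ₗ[ℝ] ℝ)) (ε : Fin n → ℝ) (i : Fin n) :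
    Set (Vsp ℓ) := {x | 0 < ε i * α i x}

/-- `C` is a sink of the system of half-spaces `(H_1^{ε_1}, …, H_n^{ε_n})`: a chamber that lies
in `H_i^{ε_i}` for each of its walls `H_i`. -/
def IsSink {ℓ n : ℕ} (α : Fin n → (Vsp ℓ →ₗ[ℝ] ℝ)) (ε : Fin n → ℝ) (C : Set (Vsp ℓ)) : Prop :=
  IsChamber α C ∧ ∀ i : Fin n, IsWall α i C → C ⊆ halfSpace α ε i

end Arrangement

namespace Arrangement

/-- The kernel of a nonzero linear form contains no kernel of another linear form but its own. -/
theorem ker_eq_of_ker_le {V : Type*} [AddCommGroup V] [Module ℝ V] {f g : V →ₗ[ℝ] ℝ}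
    (hg : g ≠ 0) (h : LinearMap.ker f ≤ LinearMap.ker g) :
    LinearMap.ker f = LinearMap.ker g := by
  refine le_antisymm h fun w hw => ?_
  by_contra hfw
  rw [LinearMap.mem_ker] at hw hfw
  refine hg (LinearMap.ext fun u => ?_)
  have hu : u - (f u / f w) • w ∈ LinearMap.ker f := by
    simp [LinearMap.mem_ker, hfw]
  have := h hu
  simpa [LinearMap.mem_ker, hw] using this

theorem cmpl_nonempty {ℓ n : ℕ} (α : Fin n → (Vsp ℓ →ₗ[ℝ] ℝ)) (hα : ∀ i, α i ≠ 0) :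
    (cmpl α).Nonempty := by
  obtain ⟨x, hx⟩ := Module.Dual.exists_forall_ne_zero_of_forall_exists α fun i => by
    by_contra! h
    exact hα i (LinearMap.ext h)
  exact ⟨x, hx⟩

/-- No form of the arrangement changes sign on a connected component of the complement. -/
theorem mul_pos_of_mem_connectedComponentIn {ℓ n : ℕ} (α : Fin n → (Vsp ℓ →ₗ[ℝ] ℝ))
    {x y : Vsp ℓ} (hx : x ∈ cmpl α) (hy : y ∈ connectedComponentIn (cmpl α) x) (j : Fin n) :
    0 < α j x * α j y := by
  have hpre := (isPreconnected_connectedComponentIn (F := cmpl α) (x := x)).image (α j)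
    (α j).continuous_of_finiteDimensional.continuousOn
  have hord := hpre.ordConnected
  have hne : (0 : ℝ) ∉ α j '' connectedComponentIn (cmpl α) x := by
    rintro ⟨z, hz, h0⟩
    exact connectedComponentIn_subset _ _ hz j h0
  have hxm := Set.mem_image_of_mem (α j) (mem_connectedComponentIn hx)
  have hym := Set.mem_image_of_mem (α j) hy
  by_contra! h
  rcases mul_nonpos_iff.1 h with ⟨h1, h2⟩ | ⟨h1, h2⟩
  · exact hne (hord.out hym hxm ⟨h2, h1⟩)
  · exact hne (hord.out hxm hym ⟨h1, h2⟩)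

theorem mul_nonneg_of_mem_closure {ℓ n : ℕ} (α : Fin n → (Vsp ℓ →ₗ[ℝ] ℝ))
    {x p : Vsp ℓ} (hx : x ∈ cmpl α) (hp : p ∈ closure (connectedComponentIn (cmpl α) x))
    (j : Fin n) : 0 ≤ α j x * α j p := by
  have hcl : IsClosed {q : Vsp ℓ | 0 ≤ α j x * α j q} :=
    isClosed_le continuous_const
      (continuous_const.mul (α j).continuous_of_finiteDimensional)
  exact closure_minimal (fun q hq => (mul_pos_of_mem_connectedComponentIn α hx hq j).le) hcl hp

/-- A wall of the chamber of `x` contains a point that lies strictly on the same side as `x`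
of all other hyperplanes. -/
theorem exists_mem_wall {ℓ n : ℕ} (α : Fin n → (Vsp ℓ →ₗ[ℝ] ℝ)) (hα : ∀ i, α i ≠ 0)
    (hdist : ∀ i j, i ≠ j → LinearMap.ker (α i) ≠ LinearMap.ker (α j))
    {x : Vsp ℓ} (hx : x ∈ cmpl α) {i : Fin n}
    (hw : IsWall α i (connectedComponentIn (cmpl α) x)) :
    ∃ p, α i p = 0 ∧ ∀ j, j ≠ i → 0 < α j x * α j p := by
  have key : ∀ j : {j // j ≠ i}, ∃ p,
      p ∈ closure (connectedComponentIn (cmpl α) x) ∩ {q | α i q = 0} ∧ α j p ≠ 0 := by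
    rintro ⟨j, hji⟩
    by_contra! h
    refine hdist i j hji.symm (ker_eq_of_ker_le (hα j) ?_)
    rw [← hw, Submodule.span_le]
    exact h
  choose p hp hne using key
  refine ⟨∑ k, p k, ?_, fun j hji => ?_⟩
  · rw [map_sum]
    exact Finset.sum_eq_zero fun k _ => (hp k).2
  · rw [map_sum, Finset.mul_sum]
    refine Finset.sum_pos' (fun k _ => mul_nonneg_of_mem_closure α hx (hp k).1 j)
      ⟨⟨j, hji⟩, Finset.mem_univ _, ?_⟩
    exact lt_of_le_of_ne (mul_nonneg_of_mem_closure α hx (hp _).1 j)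
      (mul_ne_zero (hx j) (hne ⟨j, hji⟩)).symm

/-- Crossing a wall: some point of the complement is separated from `x` by the wall only. -/
theorem exists_mem_cmpl_across_wall {ℓ n : ℕ} (α : Fin n → (Vsp ℓ →ₗ[ℝ] ℝ))
    (hα : ∀ i, α i ≠ 0)
    (hdist : ∀ i j, i ≠ j → LinearMap.ker (α i) ≠ LinearMap.ker (α j))
    {x : Vsp ℓ} (hx : x ∈ cmpl α) {i : Fin n}
    (hw : IsWall α i (connectedComponentIn (cmpl α) x)) :
    ∃ z ∈ cmpl α, α i x * α i z < 0 ∧ ∀ j, j ≠ i → 0 < α j x * α j z := by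
  obtain ⟨p, hp0, hp⟩ := exists_mem_wall α hα hdist hx hw
  have hev : ∀ᶠ t : ℝ in Filter.atTop, ∀ j, j ≠ i → 0 < α j x * α j (t • p - x) := by
    refine Filter.eventually_all.2 fun j => ?_
    by_cases hji : j = i
    · simp [hji]
    · filter_upwards [Filter.eventually_gt_atTop (α j x * α j x / (α j x * α j p))] with t ht _
      rw [div_lt_iff₀ (hp j hji)] at ht
      simp only [map_sub, map_smul, smul_eq_mul]
      linarith
  obtain ⟨t, ht⟩ := hev.exists
  have hi : α i x * α i (t • p - x) < 0 := by
    simp only [map_sub, map_smul, smul_eq_mul, hp0, mul_zero, zero_sub, mul_neg, neg_lt_zero]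
    exact mul_self_pos.2 (hx i)
  refine ⟨t • p - x, fun j => ?_, hi, ht⟩
  by_cases hji : j = i
  · subst hji
    exact right_ne_zero_of_mul hi.ne
  · exact right_ne_zero_of_mul (ht j hji).ne'

end Arrangement

/-- Every system of half-spaces of a central essential arrangement of (pairwise distinct)
hyperplanes `H_i = ker (α i)` admits a sink. -/
theorem exists_sink (ℓ n : ℕ) (α : Fin n → (Arrangement.Vsp ℓ →ₗ[ℝ] ℝ))
    (hα : ∀ i, α i ≠ 0)
    (hdist : ∀ i j, i ≠ j → LinearMap.ker (α i) ≠ LinearMap.ker (α j))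
    (hess : (⋂ i, (LinearMap.ker (α i) : Set (Arrangement.Vsp ℓ))) = {0})
    (ε : Fin n → ℝ) (hε : ∀ i, ε i = 1 ∨ ε i = -1) :
    ∃ C : Set (Arrangement.Vsp ℓ), Arrangement.IsSink α ε C := by
  classical
  let pos : Arrangement.Vsp ℓ → Finset (Fin n) := fun x => {j | 0 < ε j * α j x}
  obtain ⟨_, ⟨x, hx, rfl⟩, hmax⟩ :=
    (Set.toFinite (pos '' Arrangement.cmpl α)).exists_maximal
      ((Arrangement.cmpl_nonempty α hα).image pos)
  refine ⟨_, ⟨x, hx, rfl⟩, fun i hw y hy => ?_⟩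
  have hxy := Arrangement.mul_pos_of_mem_connectedComponentIn α hx hy i
  obtain ⟨z, hz, hzi, hzj⟩ := Arrangement.exists_mem_cmpl_across_wall α hα hdist hx hw
  have hsq : ∀ j, ε j * ε j = 1 := fun j => by rcases hε j with h | h <;> simp [h]
  have hprod : ∀ j (a b : ℝ), (ε j * a) * (ε j * b) = a * b := fun j a b => by
    rw [mul_mul_mul_comm, hsq, one_mul]
  change 0 < ε i * α i y
  rw [← hprod i] at hxy hzi
  by_contra hneg
  have hxi : ε i * α i x < 0 := by
    rcases mul_pos_iff.1 hxy with h | h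
    · exact absurd h.2 hneg
    · exact h.1
  have hle : pos x ≤ pos z := fun j hj => by
    simp only [pos, Finset.mem_filter_univ] at hj ⊢
    have hji : j ≠ i := by
      rintro rfl
      exact lt_asymm hj hxi
    have := hzj j hji
    rw [← hprod j] at this
    exact (mul_pos_iff_of_pos_left hj).1 this
  have hiz : i ∈ pos z := by
    simp only [pos, Finset.mem_filter_univ]
    exact (mul_neg_iff.1 hzi).resolve_left (fun h => lt_asymm h.1 hxi) |>.2
  have hix : i ∈ pos x := hmax ⟨z, hz, rfl⟩ hle hiz
  simp only [pos, Finset.mem_filter_univ] at hix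
  exact lt_asymm hix hxi
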